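/- Let d be a positive integer and let k₁,…,k_{d+1} be pairwise coprime integers, each at least 2. For n ≥ max_j k_j let T_n be the stacked cyclic-convolution map T_n(u) = (u ⊛ b_{k₁}, …, u ⊛ b_{k_{d+1}}) on ℂ^{(ℤ/nℤ)^d}, and define f : [0,2π]^d → ℝ by f(ω₁,…,ω_d) = (Σ_{j=1}^{d+1} Π_{ℓ=1}^{d} f_{k_j}(ω_ℓ)²)^{1/2}. Then T_n*T_n is invertible for every such n, and lim_{n→∞} tr((T_n*T_n)^{−1}) / n^d = (2π)^{−d} ∫_{[0,2π]^d} f(ω₁,…,ω_d)^{−2} dω₁⋯dω_d. -/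

import Mathlib

open scoped BigOperators

/-- The `d`-dimensional normalized box filter of size `k` on `[n]^d` (indices in `ℤ/nℤ`,
represented by `Fin n`): value `1/k^d` if every coordinate is in `{0,…,k-1}`, else `0`. -/
noncomputable def boxC (n k d : ℕ) : (Fin d → Fin n) → ℂ :=
  fun t => if ∀ ℓ, (t ℓ : ℕ) < k then 1 / (k : ℂ) ^ d else 0

/-- Cyclic convolution on `(ℤ/nℤ)^d`: `(u ⊛ b)(t) = ∑_s b(s) u(t - s)`, indices mod `n`. -/
noncomputable def cconv (n d : ℕ) (b u : (Fin d → Fin n) → ℂ) : (Fin d → Fin n) → ℂ :=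
  fun t => ∑ s : Fin d → Fin n, b s * u fun ℓ => t ℓ - s ℓ

/-- Discrete Fourier transform of `v` at the discrete frequency `ω = 2πm/n`, `m ∈ [n]^d`:
`v̄(ω) = ∑_{t ∈ [n]^d} v(t) e^{-i ∑_ℓ t_ℓ ω_ℓ}`. -/
noncomputable def dft (n d : ℕ) (v : (Fin d → Fin n) → ℂ) (m : Fin d → Fin n) : ℂ :=
  ∑ t : Fin d → Fin n, v t *
    Complex.exp (-Complex.I * ∑ ℓ, ((t ℓ : ℕ) : ℂ) * (2 * (Real.pi : ℂ) * ((m ℓ : ℕ) : ℂ) / (n : ℂ)))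

/-- The periodic sinc `f_k : [0,2π] → ℝ`, `f_k(ω) = sin(kω/2)/(k sin(ω/2))` on `(0,2π)`,
extended continuously by `f_k(0) = f_k(2π) = 1`. -/
noncomputable def psinc (k : ℕ) (ω : ℝ) : ℝ :=
  if ω = 0 ∨ ω = 2 * Real.pi then 1 else Real.sin (k * ω / 2) / (k * Real.sin (ω / 2))

/-- `f(ω₁,…,ω_d) = (∑_{j=1}^{s} ∏_{ℓ=1}^{d} f_{k_j}(ω_ℓ)²)^{1/2}`. -/
noncomputable def fmulti (d s : ℕ) (k : Fin s → ℕ) (ω : Fin d → ℝ) : ℝ :=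
  Real.sqrt (∑ j, ∏ ℓ, psinc (k j) (ω ℓ) ^ 2)

/-!
The characters of `(ℤ/nℤ)^d` are common eigenvectors of all cyclic convolutions, so `T*T` is
diagonal in the basis of characters, with the eigenvalue `f(2πm/n)²` at the frequency `m`. A zero
`ω` of the one-dimensional symbol of size `k` makes `exp(-iω)` a nontrivial `k`-th root of unity,
so two coprime sizes have no common zero. If `f²` vanished at `ω`, each of the more than `d`
filters would vanish at some coordinate of `ω`, and by the pigeonhole principle two of them at the
same one. Hence `f⁻²` is continuous, and the normalized trace of `(T*T)⁻¹` is one of its Riemann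
sums.
-/

section Eigenbasis

variable {K V ι : Type*} [Field K] [AddCommGroup V] [Module K V]
  {b : Module.Basis ι K V} {S : Module.End K V} {c : ι → K}

lemma trace_eq_sum_of_eigenbasis [Fintype ι] (hS : ∀ i, S (b i) = c i • b i) :
    LinearMap.trace K V S = ∑ i, c i := by
  classical
  rw [LinearMap.trace_eq_matrix_trace K b S]
  simp [Matrix.trace, LinearMap.toMatrix_apply, hS]

lemma isUnit_of_eigenbasis [Finite ι] (hS : ∀ i, S (b i) = c i • b i) (hc : ∀ i, c i ≠ 0) :
    IsUnit S := by
  classical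
  have := Fintype.ofFinite ι
  have hdiag : S = Matrix.toLinAlgEquiv b (Matrix.diagonal c) :=
    b.ext fun i => by simp [hS, Matrix.toLinAlgEquiv_self, Matrix.diagonal_apply]
  rw [hdiag]
  exact (Matrix.isUnit_diagonal.2 (Pi.isUnit_iff.2 fun i => (hc i).isUnit)).map _

lemma trace_inverse_eq_sum_of_eigenbasis [Fintype ι] (hS : ∀ i, S (b i) = c i • b i)
    (hc : ∀ i, c i ≠ 0) :
    LinearMap.trace K V (Ring.inverse S) = ∑ i, (c i)⁻¹ := by
  refine trace_eq_sum_of_eigenbasis (b := b) fun i => ?_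
  rw [eq_inv_smul_iff₀ (hc i), ← map_smul, ← hS i, ← Module.End.mul_apply,
    Ring.inverse_mul_cancel S (isUnit_of_eigenbasis hS hc), Module.End.one_apply]

end Eigenbasis

lemma adjoint_comp_self_apply_basis {𝕜 V W ι : Type*} [RCLike 𝕜] [NormedAddCommGroup V]
    [InnerProductSpace 𝕜 V] [FiniteDimensional 𝕜 V] [NormedAddCommGroup W]
    [InnerProductSpace 𝕜 W] [FiniteDimensional 𝕜 W] (b : Module.Basis ι 𝕜 V)
    (T : V →ₗ[𝕜] W) {i : ι} {c : 𝕜}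
    (hT : ∀ j, inner 𝕜 (T (b j)) (T (b i)) = c * inner 𝕜 (b j) (b i)) :
    (LinearMap.adjoint T ∘ₗ T) (b i) = c • b i :=
  InnerProductSpace.ext_inner_left_basis (𝕜 := 𝕜) b fun j => by
    rw [LinearMap.comp_apply, LinearMap.adjoint_inner_right, hT, inner_smul_right]

lemma inner_toLp_addChar_of_ne {𝕜 G : Type*} [RCLike 𝕜] [AddCommGroup G] [Fintype G]
    {ψ ψ' : AddChar G 𝕜} (h : ψ ≠ ψ') :
    inner 𝕜 (WithLp.toLp 2 (ψ : G → 𝕜)) (WithLp.toLp 2 (ψ' : G → 𝕜)) = 0 := by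
  have horth := AddChar.wInner_cWeight_eq_zero_iff_ne.2 h
  rw [RCLike.wInner_cWeight_eq_smul_wInner_one, RCLike.wInner_one_eq_inner] at horth
  exact (smul_eq_zero.1 horth).resolve_left (by simp)

section Fourier

variable {n d : ℕ} [NeZero n]

/-- The character `t ↦ exp (2πi ∑ ℓ, m ℓ * t ℓ / n)` of `(ℤ/nℤ)^d`. -/
noncomputable def fourierChar (m : Fin d → Fin n) : AddChar (Fin d → Fin n) ℂ :=
  ZMod.stdAddChar.compAddMonoidHom <|
    AddMonoidHom.mk' (fun t => ∑ ℓ, ((m ℓ : ℕ) : ZMod n) * ((t ℓ : ℕ) : ZMod n)) fun s t => by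
      simp [Fin.val_add, mul_add, Finset.sum_add_distrib]

lemma fourierChar_apply (m t : Fin d → Fin n) :
    fourierChar m t = ZMod.stdAddChar (∑ ℓ, ((m ℓ : ℕ) : ZMod n) * ((t ℓ : ℕ) : ZMod n)) :=
  rfl

lemma fourierChar_neg (m t : Fin d → Fin n) :
    fourierChar m (-t) = Complex.exp (-Complex.I *
      ∑ ℓ, ((t ℓ : ℕ) : ℂ) * (2 * (Real.pi : ℂ) * ((m ℓ : ℕ) : ℂ) / (n : ℂ))) := by
  have hcast : (∑ ℓ, ((m ℓ : ℕ) : ZMod n) * ((t ℓ : ℕ) : ZMod n)) =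
      ((∑ ℓ, (m ℓ : ℕ) * (t ℓ : ℕ) : ℤ) : ZMod n) := by push_cast; rfl
  rw [AddChar.map_neg_eq_inv, fourierChar_apply, hcast, ZMod.stdAddChar_coe, ← Complex.exp_neg]
  congr 1
  push_cast
  rw [Finset.mul_sum, Finset.mul_sum, Finset.sum_div, ← Finset.sum_neg_distrib]
  exact Finset.sum_congr rfl fun ℓ _ => by ring

lemma fourierChar_single (m : Fin d → Fin n) (ℓ : Fin d) :
    fourierChar m (Pi.single ℓ 1) = ZMod.stdAddChar ((m ℓ : ℕ) : ZMod n) := by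
  rw [fourierChar_apply, Finset.sum_eq_single ℓ] <;> simp +contextual

lemma fourierChar_injective : Function.Injective (fourierChar (n := n) (d := d)) := by
  intro m m' h
  ext ℓ
  have hℓ : ((m ℓ : ℕ) : ZMod n) = ((m' ℓ : ℕ) : ZMod n) := ZMod.injective_stdAddChar <| by
    rw [← fourierChar_single, h, fourierChar_single]
  rwa [ZMod.natCast_eq_natCast_iff', Nat.mod_eq_of_lt (m ℓ).2, Nat.mod_eq_of_lt (m' ℓ).2] at hℓ

/-- The basis of `ℂ^{(ℤ/nℤ)^d}` consisting of the (unnormalized) characters `fourierChar m`. -/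
noncomputable def charBasis (n d : ℕ) [NeZero n] :
    Module.Basis (Fin d → Fin n) ℂ (EuclideanSpace ℂ (Fin d → Fin n)) :=
  basisOfLinearIndependentOfCardEqFinrank
    (b := fun m => WithLp.toLp 2 ⇑(fourierChar m))
    (linearIndependent_of_ne_zero_of_inner_eq_zero
      (fun m => by simp)
      fun _ _ hne => inner_toLp_addChar_of_ne (fourierChar_injective.ne hne)) (by simp)

lemma charBasis_apply (m : Fin d → Fin n) :
    charBasis n d m = WithLp.toLp 2 ⇑(fourierChar m) := by
  simp [charBasis]

lemma cconv_fourierChar (b : (Fin d → Fin n) → ℂ) (m t : Fin d → Fin n) :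
    cconv n d b (fourierChar m) t = dft n d b m * fourierChar m t := by
  have hsub (s : Fin d → Fin n) : fourierChar m (fun ℓ => t ℓ - s ℓ) =
      fourierChar m t * fourierChar m (-s) := by
    rw [← AddChar.map_add_eq_mul, ← sub_eq_add_neg]; rfl
  simp only [cconv, dft, Finset.sum_mul, hsub, fourierChar_neg]
  exact Finset.sum_congr rfl fun s _ => by ring

/-- The eigenvalue of `T*T` at the character `fourierChar m`, for the stacked cyclic convolution
`T` with the filters `b j`. -/
noncomputable def powerSpectrum {κ : Type*} [Fintype κ] (b : κ → (Fin d → Fin n) → ℂ)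
    (m : Fin d → Fin n) : ℝ :=
  ∑ j, ‖dft n d (b j) m‖ ^ 2

variable {κ : Type*} [Fintype κ] {b : κ → (Fin d → Fin n) → ℂ}
  {T : EuclideanSpace ℂ (Fin d → Fin n) →ₗ[ℂ] EuclideanSpace ℂ (κ × (Fin d → Fin n))}

lemma adjoint_comp_self_charBasis (hT : ∀ u p, T u p = cconv n d (b p.1) u p.2)
    (m : Fin d → Fin n) :
    (LinearMap.adjoint T ∘ₗ T) (charBasis n d m) =
      (powerSpectrum b m : ℂ) • charBasis n d m := by
  refine adjoint_comp_self_apply_basis _ T fun m' => ?_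
  have hinner : inner ℂ (T (charBasis n d m')) (T (charBasis n d m)) =
      (∑ j, starRingEnd ℂ (dft n d (b j) m') * dft n d (b j) m) *
        inner ℂ (charBasis n d m') (charBasis n d m) := by
    simp only [PiLp.inner_apply, Fintype.sum_prod_type, hT, charBasis_apply, cconv_fourierChar,
      Finset.sum_mul_sum, RCLike.inner_apply, map_mul]
    exact Finset.sum_congr rfl fun j _ => Finset.sum_congr rfl fun t _ => by ring
  rw [hinner]
  rcases eq_or_ne m' m with rfl | hne
  · simp only [Complex.conj_mul', powerSpectrum, Complex.ofReal_sum, Complex.ofReal_pow]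
  · simp only [charBasis_apply, inner_toLp_addChar_of_ne (fourierChar_injective.ne hne), mul_zero]

lemma isUnit_adjoint_comp_self (hT : ∀ u p, T u p = cconv n d (b p.1) u p.2)
    (hb : ∀ m, powerSpectrum b m ≠ 0) :
    IsUnit (LinearMap.adjoint T ∘ₗ T : Module.End ℂ (EuclideanSpace ℂ (Fin d → Fin n))) :=
  isUnit_of_eigenbasis (adjoint_comp_self_charBasis hT) fun m => mod_cast hb m

lemma trace_inverse_adjoint_comp_self (hT : ∀ u p, T u p = cconv n d (b p.1) u p.2)
    (hb : ∀ m, powerSpectrum b m ≠ 0) :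
    LinearMap.trace ℂ _ (Ring.inverse (LinearMap.adjoint T ∘ₗ T)) =
      ((∑ m, (powerSpectrum b m)⁻¹ : ℝ) : ℂ) := by
  rw [trace_inverse_eq_sum_of_eigenbasis (adjoint_comp_self_charBasis hT) fun m => mod_cast hb m]
  push_cast
  rfl

end Fourier

section BoxSymbol

/-- The frequency response of the one-dimensional normalized box filter of size `k`. For `0 < k` its
modulus on `[0, 2π]` is `|psinc k|`. -/
noncomputable def boxSymbol (k : ℕ) (ω : ℝ) : ℂ :=
  (∑ t ∈ Finset.range k, Complex.exp (-(Complex.I * ω)) ^ t) / k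

lemma continuous_boxSymbol (k : ℕ) : Continuous (boxSymbol k) := by
  unfold boxSymbol
  fun_prop

lemma norm_boxSymbol {ω : ℝ} (hω : Real.sin (ω / 2) ≠ 0) (k : ℕ) :
    ‖boxSymbol k ω‖ = |Real.sin (k * ω / 2) / (k * Real.sin (ω / 2))| := by
  have hchord (x : ℝ) : ‖Complex.exp (-(Complex.I * x)) - 1‖ = 2 * |Real.sin (x / 2)| := by
    simpa [neg_div] using Complex.norm_exp_I_mul_ofReal_sub_one (-x)
  have hpow : Complex.exp (-(Complex.I * ω)) ^ k = Complex.exp (-(Complex.I * (k * ω : ℝ))) := by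
    rw [← Complex.exp_nat_mul]; congr 1; push_cast; ring
  have hne : Complex.exp (-(Complex.I * ω)) ≠ 1 := fun h => hω <| by simpa [h] using hchord ω
  rw [boxSymbol, geom_sum_eq hne, hpow, norm_div, norm_div, hchord, hchord,
    mul_div_mul_left _ _ two_ne_zero, Complex.norm_natCast, abs_div, abs_mul, Nat.abs_cast,
    div_div, mul_comm (k : ℝ) |_|]

lemma boxSymbol_of_exp_eq_one {k : ℕ} (hk : 0 < k) {ω : ℝ}
    (hω : Complex.exp (-(Complex.I * ω)) = 1) : boxSymbol k ω = 1 := by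
  simp [boxSymbol, hω, hk.ne']

lemma psinc_sq {k : ℕ} (hk : 0 < k) {ω : ℝ} (hω : ω ∈ Set.Icc 0 (2 * Real.pi)) :
    psinc k ω ^ 2 = ‖boxSymbol k ω‖ ^ 2 := by
  rw [psinc]
  split_ifs with hend
  · have hexp : Complex.exp (-(Complex.I * ω)) = 1 := by
      rcases hend with rfl | rfl
      · simp
      · exact Complex.exp_eq_one_iff.2 ⟨-1, by push_cast; ring⟩
    simp [boxSymbol_of_exp_eq_one hk hexp]
  · rw [not_or] at hend
    have hsin : 0 < Real.sin (ω / 2) := Real.sin_pos_of_pos_of_lt_pi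
      (half_pos (hω.1.lt_of_ne' hend.1)) (by linarith [hω.2.lt_of_ne hend.2])
    rw [norm_boxSymbol hsin.ne', sq_abs]

lemma exp_ne_one_of_boxSymbol_eq_zero {k : ℕ} (hk : 0 < k) {ω : ℝ} (h : boxSymbol k ω = 0) :
    Complex.exp (-(Complex.I * ω)) ≠ 1 := fun h1 =>
  one_ne_zero ((boxSymbol_of_exp_eq_one hk h1).symm.trans h)

lemma exp_pow_eq_one_of_boxSymbol_eq_zero {k : ℕ} (hk : 0 < k) {ω : ℝ} (h : boxSymbol k ω = 0) :
    Complex.exp (-(Complex.I * ω)) ^ k = 1 := by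
  have hsum : ∑ t ∈ Finset.range k, Complex.exp (-(Complex.I * ω)) ^ t = 0 := by
    simpa [boxSymbol, hk.ne'] using h
  rw [← sub_eq_zero, ← geom_sum_mul, hsum, zero_mul]

lemma boxSymbol_ne_zero_of_coprime {k l : ℕ} (hk : 0 < k) (hl : 0 < l) (hkl : k.Coprime l) {ω : ℝ}
    (h : boxSymbol k ω = 0) : boxSymbol l ω ≠ 0 := fun h' =>
  exp_ne_one_of_boxSymbol_eq_zero hk h <| orderOf_eq_one_iff.1 <|
    Nat.eq_one_of_dvd_coprimes hkl
      (orderOf_dvd_of_pow_eq_one (exp_pow_eq_one_of_boxSymbol_eq_zero hk h))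
      (orderOf_dvd_of_pow_eq_one (exp_pow_eq_one_of_boxSymbol_eq_zero hl h'))

/-- The symbol of `T*T` for the stack `T` of the convolutions with the box filters of sizes `k j`.
It is the square of `fmulti` on `[0, 2π]^d` and, unlike that, continuous on the whole space (`psinc`
takes the junk value `0` at the other multiples of `2π`). -/
noncomputable def stackedSymbol {ι κ : Type*} [Fintype ι] [Fintype κ] (k : κ → ℕ) (ω : ι → ℝ) : ℝ :=
  ∑ j, ∏ ℓ, ‖boxSymbol (k j) (ω ℓ)‖ ^ 2

variable {ι κ : Type*} [Fintype ι] [Fintype κ]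

lemma continuous_stackedSymbol (k : κ → ℕ) : Continuous (stackedSymbol k : (ι → ℝ) → ℝ) := by
  have := fun j => continuous_boxSymbol (k j)
  unfold stackedSymbol
  fun_prop

lemma stackedSymbol_pos {k : κ → ℕ} (hcard : Fintype.card ι < Fintype.card κ)
    (hk : ∀ j, 0 < k j) (hcop : Pairwise fun i j => (k i).Coprime (k j)) (ω : ι → ℝ) :
    0 < stackedSymbol k ω := by
  have hnonneg (j : κ) : 0 ≤ ∏ ℓ, ‖boxSymbol (k j) (ω ℓ)‖ ^ 2 := by positivity
  refine (Finset.sum_nonneg fun j _ => hnonneg j).lt_of_ne' fun hzero => ?_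
  have hroot (j : κ) : ∃ ℓ, boxSymbol (k j) (ω ℓ) = 0 := by
    have hj := (Finset.sum_eq_zero_iff_of_nonneg fun j _ => hnonneg j).1 hzero j (Finset.mem_univ j)
    simpa [Finset.prod_eq_zero_iff] using hj
  choose g hg using hroot
  obtain ⟨i, j, hij, hgij⟩ := Fintype.exists_ne_map_eq_of_card_lt g hcard
  exact boxSymbol_ne_zero_of_coprime (hk i) (hk j) (hcop hij) (hg i) (hgij ▸ hg j)

lemma fmulti_sq {d s : ℕ} {k : Fin s → ℕ} (hk : ∀ j, 0 < k j) {ω : Fin d → ℝ}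
    (hω : ω ∈ Set.univ.pi fun _ : Fin d => Set.Icc (0 : ℝ) (2 * Real.pi)) :
    fmulti d s k ω ^ 2 = stackedSymbol k ω := by
  rw [fmulti, Real.sq_sqrt (by positivity)]
  exact Finset.sum_congr rfl fun j _ => Finset.prod_congr rfl fun ℓ _ =>
    psinc_sq (hk j) (hω ℓ trivial)

open MeasureTheory in
lemma setIntegral_one_div_fmulti_sq {d s : ℕ} {k : Fin s → ℕ} (hk : ∀ j, 0 < k j) :
    ∫ ω in Set.univ.pi fun _ : Fin d => Set.Icc (0 : ℝ) (2 * Real.pi), 1 / fmulti d s k ω ^ 2 =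
      ∫ ω in Set.univ.pi fun _ : Fin d => Set.Icc (0 : ℝ) (2 * Real.pi), (stackedSymbol k ω)⁻¹ :=
  setIntegral_congr_fun (MeasurableSet.univ_pi fun _ => measurableSet_Icc) fun ω hω => by
    simp only [fmulti_sq hk hω, one_div]

lemma boxC_eq_prod (n k d : ℕ) (t : Fin d → Fin n) :
    boxC n k d t = ∏ ℓ, if (t ℓ : ℕ) < k then 1 / (k : ℂ) else 0 := by
  rw [Fintype.prod_ite_zero]
  simp [boxC]

lemma sum_box_mul_exp {n k : ℕ} (hkn : k ≤ n) (ω : ℝ) :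
    ∑ t : Fin n, (if (t : ℕ) < k then 1 / (k : ℂ) else 0) *
      Complex.exp (-(Complex.I * ω)) ^ (t : ℕ) = boxSymbol k ω := by
  have hfilter : (Finset.range n).filter (· < k) = Finset.range k := by
    ext t
    simp only [Finset.mem_filter, Finset.mem_range]
    omega
  rw [Fin.sum_univ_eq_sum_range fun t => (if t < k then 1 / (k : ℂ) else 0) *
    Complex.exp (-(Complex.I * ω)) ^ t]
  simp only [ite_mul, zero_mul, ← Finset.sum_filter, hfilter, boxSymbol, Finset.sum_div,
    one_div_mul_eq_div]

lemma dft_boxC {n k : ℕ} (hkn : k ≤ n) {d : ℕ} (m : Fin d → Fin n) :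
    dft n d (boxC n k d) m = ∏ ℓ, boxSymbol k (2 * Real.pi * ((m ℓ : ℕ) / (n : ℝ))) := by
  simp_rw [← sum_box_mul_exp hkn, Fintype.prod_sum, Finset.prod_mul_distrib, ← boxC_eq_prod, dft]
  refine Finset.sum_congr rfl fun t _ => ?_
  simp only [← Complex.exp_nat_mul, ← Complex.exp_sum, Finset.mul_sum]
  congr 2
  refine Finset.sum_congr rfl fun ℓ _ => ?_
  push_cast
  ring

lemma powerSpectrum_boxC {n d : ℕ} {k : κ → ℕ} (hkn : ∀ j, k j ≤ n) (m : Fin d → Fin n) :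
    powerSpectrum (fun j => boxC n (k j) d) m =
      stackedSymbol k fun ℓ => 2 * Real.pi * ((m ℓ : ℕ) / (n : ℝ)) := by
  simp only [powerSpectrum, stackedSymbol, dft_boxC (hkn _), norm_prod, Finset.prod_pow]

end BoxSymbol

section RiemannSum

open MeasureTheory Filter
open scoped Pointwise

variable {ι : Type*}

lemma exists_fin_div_eq_iff {n : ℕ} (hn : 0 < n) (x : ℝ) :
    (∃ j : Fin n, ((j : ℕ) : ℝ) / n = x) ↔
      x ∈ Set.Ico 0 1 ∧ n * x ∈ Set.range (algebraMap ℤ ℝ) := by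
  have hn' : (0 : ℝ) < n := Nat.cast_pos.2 hn
  constructor
  · rintro ⟨j, rfl⟩
    exact ⟨⟨by positivity, (div_lt_one hn').2 (mod_cast j.2)⟩, j, by
      rw [mul_div_cancel₀ _ hn'.ne']; rfl⟩
  · rintro ⟨⟨hx0, hx1⟩, z, hz⟩
    rw [eq_intCast] at hz
    lift z to ℕ using by exact_mod_cast hz ▸ mul_nonneg hn'.le hx0
    refine ⟨⟨z, ?_⟩, ?_⟩
    · exact_mod_cast hz.trans_lt (mul_lt_of_lt_one_right hn' hx1)
    · exact (div_eq_iff hn'.ne').2 (by simpa [mul_comm] using hz)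

lemma unitCube_inter_smul_lattice [Finite ι] {n : ℕ} (hn : 0 < n) :
    (Set.univ.pi fun _ : ι => Set.Ico (0 : ℝ) 1) ∩
        (n : ℝ)⁻¹ • (Submodule.span ℤ (Set.range (Pi.basisFun ℝ ι)) : Set (ι → ℝ)) =
      Set.range fun (m : ι → Fin n) ℓ => (m ℓ : ℕ) / (n : ℝ) := by
  have := Fintype.ofFinite ι
  have : NeZero n := ⟨hn.ne'⟩
  ext x
  rw [← Submodule.coe_pointwise_smul, Set.mem_inter_iff, Set.mem_univ_pi, SetLike.mem_coe,
    BoxIntegral.unitPartition.mem_smul_span_iff, ← forall_and]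
  simp_rw [← exists_fin_div_eq_iff hn]
  simp only [Classical.skolem, Set.mem_range, funext_iff]

lemma tendsto_sum_unitCube_div_pow [Fintype ι] [DecidableEq ι] {F : (ι → ℝ) → ℝ}
    (hF : Continuous F) :
    Tendsto (fun n : ℕ => (∑ m : ι → Fin n, F fun ℓ => (m ℓ : ℕ) / (n : ℝ)) /
        (n : ℝ) ^ Fintype.card ι)
      atTop (nhds (∫ x in Set.univ.pi fun _ : ι => Set.Ico (0 : ℝ) 1, F x)) := by
  refine (tendsto_tsum_div_pow_atTop_integral _ F hF
    (Bornology.IsBounded.pi fun _ => Metric.isBounded_Ico 0 1)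
    (MeasurableSet.univ_pi fun _ => measurableSet_Ico)
    (Convex.addHaar_frontier _ (convex_pi fun _ _ => convex_Ico 0 1))).congr' ?_
  filter_upwards [eventually_gt_atTop 0] with n hn
  have hinj : Function.Injective fun (m : ι → Fin n) ℓ => ((m ℓ : ℕ) / (n : ℝ)) := fun m m' h => by
    ext ℓ
    simpa [div_left_inj' (Nat.cast_ne_zero.2 hn.ne' : (n : ℝ) ≠ 0)] using congrFun h ℓ
  rw [unitCube_inter_smul_lattice hn, tsum_range F hinj, tsum_fintype]

lemma tendsto_sum_cube_div_pow [Fintype ι] [DecidableEq ι] {F : (ι → ℝ) → ℝ} (hF : Continuous F)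
    {a : ℝ} (ha : 0 < a) :
    Tendsto (fun n : ℕ => (∑ m : ι → Fin n, F fun ℓ => a * ((m ℓ : ℕ) / (n : ℝ))) /
        (n : ℝ) ^ Fintype.card ι)
      atTop (nhds ((a ^ Fintype.card ι)⁻¹ *
        ∫ x in Set.univ.pi fun _ : ι => Set.Icc (0 : ℝ) a, F x)) := by
  have hae : (Set.univ.pi fun _ : ι => Set.Ico (0 : ℝ) 1) =ᵐ[volume]
      Set.univ.pi fun _ => Set.Icc 0 1 :=
    Measure.pi_Ico_ae_eq_pi_Icc
  have hscale : a • (Set.univ.pi fun _ : ι => Set.Icc (0 : ℝ) 1) =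
      Set.univ.pi fun _ => Set.Icc (0 : ℝ) a := by
    simp only [Set.smul_set_univ_pi, Pi.smul_def, LinearOrderedField.smul_Icc ha, mul_zero, mul_one]
  have hint : ∫ x in Set.univ.pi fun _ : ι => Set.Ico (0 : ℝ) 1, F (a • x) =
      (a ^ Fintype.card ι)⁻¹ * ∫ x in Set.univ.pi fun _ : ι => Set.Icc (0 : ℝ) a, F x := by
    rw [setIntegral_congr_set hae, Measure.setIntegral_comp_smul_of_pos _ _ _ ha, hscale,
      Module.finrank_fintype_fun_eq_card, smul_eq_mul]
  rw [← hint]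
  exact tendsto_sum_unitCube_div_pow (F := fun x => F (a • x)) (by fun_prop)

end RiemannSum

theorem stmt17_general (d s : ℕ) (hs : d < s) (k : Fin s → ℕ) (hk : ∀ j, 0 < k j)
    (hcop : Pairwise fun i j => (k i).Coprime (k j))
    (T : ∀ n : ℕ, EuclideanSpace ℂ (Fin d → Fin n) →ₗ[ℂ]
      EuclideanSpace ℂ (Fin s × (Fin d → Fin n)))
    (hT : ∀ (n : ℕ) (u : EuclideanSpace ℂ (Fin d → Fin n)) (p : Fin s × (Fin d → Fin n)),
      T n u p = cconv n d (boxC n (k p.1) d) u p.2) :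
    (∀ n : ℕ, (∀ j, k j ≤ n) →
      IsUnit ((LinearMap.adjoint (T n) ∘ₗ T n :
        Module.End ℂ (EuclideanSpace ℂ (Fin d → Fin n))))) ∧
    Filter.Tendsto
      (fun n : ℕ => LinearMap.trace ℂ (EuclideanSpace ℂ (Fin d → Fin n))
          (Ring.inverse (LinearMap.adjoint (T n) ∘ₗ T n)) / (n : ℂ) ^ d)
      Filter.atTop
      (nhds (((((2 * Real.pi) ^ d)⁻¹ *
        ∫ ω in Set.univ.pi fun _ : Fin d => Set.Icc (0 : ℝ) (2 * Real.pi),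
          1 / fmulti d s k ω ^ 2 : ℝ)) : ℂ)) := by
  have hpos (ω : Fin d → ℝ) : 0 < stackedSymbol k ω := stackedSymbol_pos (by simpa) hk hcop ω
  have hn0 {n : ℕ} (hkn : ∀ j, k j ≤ n) : NeZero n :=
    ⟨((hk ⟨d, hs⟩).trans_le (hkn ⟨d, hs⟩)).ne'⟩
  have hspec {n : ℕ} (hkn : ∀ j, k j ≤ n) (m : Fin d → Fin n) :
      powerSpectrum (fun j => boxC n (k j) d) m ≠ 0 :=
    powerSpectrum_boxC hkn m ▸ (hpos _).ne'
  refine ⟨fun n hkn => have := hn0 hkn; isUnit_adjoint_comp_self (hT n) (hspec hkn), ?_⟩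
  have hlim := tendsto_sum_cube_div_pow (F := fun ω : Fin d → ℝ => (stackedSymbol k ω)⁻¹)
    ((continuous_stackedSymbol k).inv₀ fun ω => (hpos ω).ne') Real.two_pi_pos
  rw [Fintype.card_fin, ← setIntegral_one_div_fmulti_sq hk] at hlim
  refine ((Complex.continuous_ofReal.tendsto _).comp hlim).congr' ?_
  filter_upwards [Filter.eventually_all.2 fun j => Filter.eventually_ge_atTop (k j)] with n hkn
  have := hn0 hkn
  rw [trace_inverse_adjoint_comp_self (hT n) (hspec hkn)]
  simp [powerSpectrum_boxC hkn]

open MeasureTheory in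
theorem stmt17 (d : ℕ) (hd : 0 < d) (k : Fin (d + 1) → ℕ) (hk2 : ∀ j, 2 ≤ k j)
    (hcop : ∀ i j, i ≠ j → Nat.Coprime (k i) (k j))
    (T : ∀ n : ℕ, EuclideanSpace ℂ (Fin d → Fin n) →ₗ[ℂ]
      EuclideanSpace ℂ (Fin (d + 1) × (Fin d → Fin n)))
    (hT : ∀ (n : ℕ) (u : EuclideanSpace ℂ (Fin d → Fin n))
      (p : Fin (d + 1) × (Fin d → Fin n)),
      T n u p = cconv n d (boxC n (k p.1) d) u p.2) :
    (∀ n : ℕ, (∀ j, k j ≤ n) →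
      IsUnit ((LinearMap.adjoint (T n) ∘ₗ T n :
        Module.End ℂ (EuclideanSpace ℂ (Fin d → Fin n))))) ∧
    Filter.Tendsto
      (fun n : ℕ => LinearMap.trace ℂ (EuclideanSpace ℂ (Fin d → Fin n))
          (Ring.inverse (LinearMap.adjoint (T n) ∘ₗ T n)) / (n : ℂ) ^ d)
      Filter.atTop
      (nhds (((((2 * Real.pi) ^ d)⁻¹ *
        ∫ ω in Set.univ.pi fun _ : Fin d => Set.Icc (0 : ℝ) (2 * Real.pi),
          1 / fmulti d (d + 1) k ω ^ 2 : ℝ)) : ℂ)) :=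
  stmt17_general d (d + 1) d.lt_succ_self k (fun j => two_pos.trans_le (hk2 j))
    (fun i j => hcop i j) T hT
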